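/- Suppose (x_n) ⊆ W is a block sequence, β < ω₁, and for every normalised block sequence (y_n) in X = [x_n] and every K ≥ 1, player I has a strategy in F^β_X to play outcomes (z_0,…,z_k) satisfying (z_0,…,z_k) ≁_K (y_0,…,y_k). Then for every normalised block sequence (y_n) in X and every K ≥ 1 there is a sequence (J_m) of finite intervals of ℕ with min J_m → ∞ such that whenever A ⊆ ℕ is infinite with 0 ∈ A and Z = [x_j : j ∉ ⋃_{m∈A} J_m], then rank(T((y_n),Z,K)) ≤ β. -/

import Mathlib

open Filter Topology

namespace Rosendal

variable {𝒲 : Type} [NormedAddCommGroup 𝒲] [NormedSpace ℝ 𝒲]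

/-- `(e n)` is a Schauder basis of the Banach space `𝒲`. -/
def IsSchauderBasis (e : ℕ → 𝒲) : Prop :=
  ∀ x : 𝒲, ∃! a : ℕ → ℝ,
    Tendsto (fun N => ∑ i ∈ Finset.range N, a i • e i) atTop (𝓝 x)

/-- `x` is a linear combination of the vectors `b i`, `i ∈ s`. -/
def SuppIn (b : ℕ → 𝒲) (x : 𝒲) (s : Finset ℕ) : Prop :=
  ∃ a : ℕ → ℝ, x = ∑ i ∈ s, a i • b i

/-- `(x i)_{i<k} ∼_K (y i)_{i<k}`. -/
def SeqEquiv (K : ℝ) (k : ℕ) (x y : ℕ → 𝒲) : Prop :=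
  ∀ a : ℕ → ℝ,
    (1 / K) * ‖∑ i ∈ Finset.range k, a i • x i‖ ≤ ‖∑ i ∈ Finset.range k, a i • y i‖ ∧
    ‖∑ i ∈ Finset.range k, a i • y i‖ ≤ K * ‖∑ i ∈ Finset.range k, a i • x i‖

/-- The outcome `l = (x 0, …, x k)` satisfies `(x 0, …, x k) ∼_K (y 0, …, y k)`. -/
def OutcomeEquiv (K : ℝ) (l : List 𝒲) (y : ℕ → 𝒲) : Prop :=
  SeqEquiv K l.length (fun i => l.getD i 0) y

/-- The outcome `l = (u 0, v 0, u 1, v 1, …, u k, v k)` satisfies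
`(u 0, …, u k) ∼_K (v 0, …, v k)`. -/
def PairOutcomeEquiv (K : ℝ) (l : List 𝒲) : Prop :=
  SeqEquiv K (l.length / 2) (fun i => l.getD (2 * i) 0) (fun i => l.getD (2 * i + 1) 0)

/-- The tree `T((x n), Y, K)`. -/
def embTree (x : ℕ → 𝒲) (Y : Set 𝒲) (K : ℝ) : Set (List 𝒲) :=
  {l | (∀ v ∈ l, v ∈ Y) ∧ SeqEquiv K l.length (fun i => l.getD i 0) x}

open Classical in
/-- The rank of a tree of finite sequences; `⊤ = ∞` if it is ill-founded. -/
noncomputable def treeRank (T : Set (List 𝒲)) : WithTop Ordinal :=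
  if h : WellFounded (fun t s : T => s.val <+: t.val ∧ s.val ≠ t.val) then
    ((⨆ s : T, Order.succ ((h.apply s).rank) : Ordinal) : WithTop Ordinal)
  else ⊤

open Classical in
/-- The embeddability index `Emb((x n), Y) = sup_{K ≥ 1} rank T((x n), Y, K)`. -/
noncomputable def embIndex (x : ℕ → 𝒲) (Y : Set 𝒲) : WithTop Ordinal :=
  if ∃ K : ℝ, 1 ≤ K ∧ treeRank (embTree x Y K) = ⊤ then ⊤
  else ((sSup {o : Ordinal | ∃ K : ℝ, 1 ≤ K ∧
      (o : WithTop Ordinal) = treeRank (embTree x Y K)} : Ordinal) : WithTop Ordinal)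

/-- `(I m)` is a sequence of successive nonempty finite intervals `I 0 < I 1 < …` of `ℕ`. -/
def IntervalSeq (I : ℕ → Finset ℕ) : Prop :=
  (∀ m, ∃ a b : ℕ, a ≤ b ∧ I m = Finset.Icc a b) ∧
  ∀ m, ∀ i ∈ I m, ∀ j ∈ I (m + 1), i < j

/-- The setting of Section 2 of the paper: a Banach space `𝒲` with a Schauder basis
`(e n)`, a countable subfield `𝔽 ⊆ ℝ` closed under the norms of finite `𝔽`-linear
combinations of the basis, and the countable `𝔽`-vector space `W` spanned by `(e n)`. -/
structure Frame (𝒲 : Type) [NormedAddCommGroup 𝒲] [NormedSpace ℝ 𝒲] : Type where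
  e : ℕ → 𝒲
  complete : CompleteSpace 𝒲
  basis : IsSchauderBasis e
  𝔽 : Subfield ℝ
  countable : (𝔽 : Set ℝ).Countable
  norm_mem : ∀ (s : Finset ℕ) (a : ℕ → ℝ), (∀ i ∈ s, a i ∈ 𝔽) →
    ‖∑ i ∈ s, a i • e i‖ ∈ 𝔽

namespace Frame

variable {𝒲 : Type} [NormedAddCommGroup 𝒲] [NormedSpace ℝ 𝒲] (ctx : Frame 𝒲)

/-- The `𝔽`-linear span of a set of vectors. -/
def fspan (S : Set 𝒲) : Set 𝒲 :=
  {v | ∃ t : Finset 𝒲, ↑t ⊆ S ∧ ∃ c : 𝒲 → ℝ, (∀ w, c w ∈ ctx.𝔽) ∧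
    v = ∑ w ∈ t, c w • w}

/-- The countable `𝔽`-vector space `W` with basis `(e n)`. -/
def W : Set 𝒲 := ctx.fspan (Set.range ctx.e)

/-- `(y n)` is a block sequence with respect to the reference block basis `(b n)`:
a sequence of nonzero vectors of the `𝔽`-span of `(b n)` with successive supports. -/
def BlockSeqRel (b y : ℕ → 𝒲) : Prop :=
  (∀ n, y n ∈ ctx.fspan (Set.range b)) ∧ (∀ n, y n ≠ 0) ∧
  ∃ D : ℕ → Finset ℕ, (∀ n, SuppIn b (y n) (D n)) ∧
    ∀ n, ∀ i ∈ D n, ∀ j ∈ D (n + 1), i < j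

/-- `(y n)` is a block sequence (with respect to the basis `(e n)` of `W`). -/
def IsBlockSeq (y : ℕ → 𝒲) : Prop := ctx.BlockSeqRel ctx.e y

/-- `Y` is a block subspace of `X`: the `𝔽`-span of an infinite block sequence of
vectors of `X`. -/
def IsBlockSubspaceOf (Y X : Set 𝒲) : Prop :=
  ∃ y : ℕ → 𝒲, ctx.IsBlockSeq y ∧ (∀ n, y n ∈ X) ∧ Y = ctx.fspan (Set.range y)

/-- `Y` is a block subspace of `W`. -/
def IsBlockSubspace (Y : Set 𝒲) : Prop := ctx.IsBlockSubspaceOf Y ctx.W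

/-- `F` is a finite-dimensional `𝔽`-subspace of `X`. -/
def IsFinDimIn (F X : Set 𝒲) : Prop :=
  ∃ t : Finset 𝒲, ↑t ⊆ X ∧ F = ctx.fspan ↑t

/-- `n < F`: every vector of `F` is supported on basis vectors of index `> n`. -/
def NatLt (n : ℕ) (F : Set 𝒲) : Prop :=
  ∀ x ∈ F, ∃ s : Finset ℕ, SuppIn ctx.e x s ∧ ∀ i ∈ s, n < i

/-- `V` is an `𝔽`-subspace of `𝒲`. -/
def IsSubspace (V : Set 𝒲) : Prop :=
  (0 : 𝒲) ∈ V ∧ (∀ u v : 𝒲, u ∈ V → v ∈ V → u + v ∈ V) ∧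
    ∀ c : ℝ, c ∈ ctx.𝔽 → ∀ v ∈ V, c • v ∈ V

/-- `V` is infinite-dimensional (not contained in a finitely generated subspace). -/
def IsInfDim (V : Set 𝒲) : Prop :=
  ¬∃ t : Finset 𝒲, V ⊆ ctx.fspan ↑t

/-- Game values of the asymptotic game `F^β_X`, for player II, computed by transfinite
recursion on the ordinal bound.  `IIWinsF X S β Facc vec` states: in the asymptotic game
below `X`, from a position where the vectors `vec` have been played and the
finite-dimensional subspaces played by II span `Facc`, and where I must now play a natural
number together with an ordinal `< β`, player II has a strategy so that the final outcome
lies in `S`. -/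
noncomputable def IIWinsF (X : Set 𝒲) (S : Set (List 𝒲)) :
    Ordinal → Set 𝒲 → List 𝒲 → Prop :=
  WellFounded.fix (C := fun _ : Ordinal => Set 𝒲 → List 𝒲 → Prop) Ordinal.lt_wf
    (fun β ih Facc vec =>
      ∀ n : ℕ, ∀ ξ : Ordinal, ∀ hξ : ξ < β,
        ∃ F : Set 𝒲, ctx.IsFinDimIn F X ∧ ctx.NatLt n F ∧
          ∃ x : 𝒲, x ≠ 0 ∧ x ∈ ctx.fspan (Facc ∪ F) ∧
            (ξ = 0 → vec ++ [x] ∈ S) ∧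
            (ξ ≠ 0 → ih ξ hξ (ctx.fspan (Facc ∪ F)) (vec ++ [x])))

/-- Player II has a strategy in the asymptotic game `F^β_X` to play an outcome in `S`. -/
noncomputable def IIStratF (X : Set 𝒲) (β : Ordinal) (S : Set (List 𝒲)) : Prop :=
  (β = 0 → ([] : List 𝒲) ∈ S) ∧ (β ≠ 0 → ctx.IIWinsF X S β (ctx.fspan ∅) [])

/-- Game values of the asymptotic game `F^β_X` for player I (who plays the integers and
the ordinals, trying to steer the outcome into `S`). -/
noncomputable def IWinsF (X : Set 𝒲) (S : Set (List 𝒲)) :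
    Ordinal → Set 𝒲 → List 𝒲 → Prop :=
  WellFounded.fix (C := fun _ : Ordinal => Set 𝒲 → List 𝒲 → Prop) Ordinal.lt_wf
    (fun β ih Facc vec =>
      ∃ n : ℕ, ∃ ξ : Ordinal, ∃ hξ : ξ < β,
        ∀ F : Set 𝒲, ctx.IsFinDimIn F X → ctx.NatLt n F →
        ∀ x : 𝒲, x ≠ 0 → x ∈ ctx.fspan (Facc ∪ F) →
          (ξ = 0 → vec ++ [x] ∈ S) ∧
          (ξ ≠ 0 → ih ξ hξ (ctx.fspan (Facc ∪ F)) (vec ++ [x])))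

/-- Player I has a strategy in the asymptotic game `F^β_X` to play an outcome in `S`. -/
noncomputable def IStratF (X : Set 𝒲) (β : Ordinal) (S : Set (List 𝒲)) : Prop :=
  (β = 0 → ([] : List 𝒲) ∈ S) ∧ (β ≠ 0 → ctx.IWinsF X S β (ctx.fspan ∅) [])

/-- Game values of the Gowers game `G^α_X` for player II. -/
noncomputable def IIWinsG (X : Set 𝒲) (S : Set (List 𝒲)) :
    Ordinal → Set 𝒲 → List 𝒲 → Prop :=
  WellFounded.fix (C := fun _ : Ordinal => Set 𝒲 → List 𝒲 → Prop) Ordinal.lt_wf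
    (fun α ih Facc vec =>
      ∀ Y : Set 𝒲, ctx.IsBlockSubspaceOf Y X →
      ∀ ξ : Ordinal, ∀ hξ : ξ < α,
        ∃ F : Set 𝒲, ctx.IsFinDimIn F Y ∧
          ∃ x : 𝒲, x ≠ 0 ∧ x ∈ ctx.fspan (Facc ∪ F) ∧
            (ξ = 0 → vec ++ [x] ∈ S) ∧
            (ξ ≠ 0 → ih ξ hξ (ctx.fspan (Facc ∪ F)) (vec ++ [x])))

/-- Player II has a strategy in the generalised Gowers game `G^α_X` to play in `S`. -/
noncomputable def IIStratG (X : Set 𝒲) (α : Ordinal) (S : Set (List 𝒲)) : Prop :=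
  (α = 0 → ([] : List 𝒲) ∈ S) ∧ (α ≠ 0 → ctx.IIWinsG X S α (ctx.fspan ∅) [])

/-- Game values of the adversarial game `A^α_X` for player II (who plays the integers,
the finite-dimensional subspaces `F_l ⊆ Y_l` and the vectors `y_l`). -/
noncomputable def IIWinsA (X : Set 𝒲) (S : Set (List 𝒲)) :
    Ordinal → Set 𝒲 → Set 𝒲 → List 𝒲 → Prop :=
  WellFounded.fix (C := fun _ : Ordinal => Set 𝒲 → Set 𝒲 → List 𝒲 → Prop)
    Ordinal.lt_wf
    (fun α ih Eacc Facc vec =>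
      ∃ n : ℕ,
        ∀ E : Set 𝒲, ctx.IsFinDimIn E X → ctx.NatLt n E →
        ∀ x : 𝒲, x ≠ 0 → x ∈ ctx.fspan (Eacc ∪ E) →
        ∀ Y : Set 𝒲, ctx.IsBlockSubspaceOf Y X →
        ∀ ξ : Ordinal, ∀ hξ : ξ < α,
          ∃ F : Set 𝒲, ctx.IsFinDimIn F Y ∧
            ∃ y : 𝒲, y ≠ 0 ∧ y ∈ ctx.fspan (Facc ∪ F) ∧
              (ξ = 0 → vec ++ [x, y] ∈ S) ∧
              (ξ ≠ 0 → ih ξ hξ (ctx.fspan (Eacc ∪ E)) (ctx.fspan (Facc ∪ F))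
                (vec ++ [x, y])))

/-- Player II has a strategy in the adversarial game `A^α_X` to play in `S`. -/
noncomputable def IIStratA (X : Set 𝒲) (α : Ordinal) (S : Set (List 𝒲)) : Prop :=
  (α = 0 → ([] : List 𝒲) ∈ S) ∧
  (α ≠ 0 → ctx.IIWinsA X S α (ctx.fspan ∅) (ctx.fspan ∅) [])

/-- Game values of the adversarial game `B^α_X` for player I (who plays the
finite-dimensional subspaces `E_l ⊆ Y_l`, the vectors `x_l`, the integers and the
ordinals). -/
noncomputable def IWinsB (X : Set 𝒲) (S : Set (List 𝒲)) :
    Ordinal → Set 𝒲 → Set 𝒲 → List 𝒲 → Prop :=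
  WellFounded.fix (C := fun _ : Ordinal => Set 𝒲 → Set 𝒲 → List 𝒲 → Prop)
    Ordinal.lt_wf
    (fun α ih Eacc Facc vec =>
      ∀ Y : Set 𝒲, ctx.IsBlockSubspaceOf Y X →
        ∃ E : Set 𝒲, ctx.IsFinDimIn E Y ∧
          ∃ x : 𝒲, x ≠ 0 ∧ x ∈ ctx.fspan (Eacc ∪ E) ∧
            ∃ n : ℕ, ∃ ξ : Ordinal, ∃ hξ : ξ < α,
              ∀ F : Set 𝒲, ctx.IsFinDimIn F X → ctx.NatLt n F →
              ∀ y : 𝒲, y ≠ 0 → y ∈ ctx.fspan (Facc ∪ F) →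
                (ξ = 0 → vec ++ [x, y] ∈ S) ∧
                (ξ ≠ 0 → ih ξ hξ (ctx.fspan (Eacc ∪ E)) (ctx.fspan (Facc ∪ F))
                  (vec ++ [x, y])))

/-- Player I has a strategy in the adversarial game `B^α_X` to play in `S`. -/
noncomputable def IStratB (X : Set 𝒲) (α : Ordinal) (S : Set (List 𝒲)) : Prop :=
  (α = 0 → ([] : List 𝒲) ∈ S) ∧
  (α ≠ 0 → ctx.IWinsB X S α (ctx.fspan ∅) (ctx.fspan ∅) [])

/-- Game values of the adversarial game `B^α_X` for player II (who plays the block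
subspaces `Y_l`, the finite-dimensional subspaces `F_l` and the vectors `y_l`). -/
noncomputable def IIWinsB (X : Set 𝒲) (S : Set (List 𝒲)) :
    Ordinal → Set 𝒲 → Set 𝒲 → List 𝒲 → Prop :=
  WellFounded.fix (C := fun _ : Ordinal => Set 𝒲 → Set 𝒲 → List 𝒲 → Prop)
    Ordinal.lt_wf
    (fun α ih Eacc Facc vec =>
      ∃ Y : Set 𝒲, ctx.IsBlockSubspaceOf Y X ∧
        ∀ E : Set 𝒲, ctx.IsFinDimIn E Y →
        ∀ x : 𝒲, x ≠ 0 → x ∈ ctx.fspan (Eacc ∪ E) →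
        ∀ n : ℕ, ∀ ξ : Ordinal, ∀ hξ : ξ < α,
          ∃ F : Set 𝒲, ctx.IsFinDimIn F X ∧ ctx.NatLt n F ∧
            ∃ y : 𝒲, y ≠ 0 ∧ y ∈ ctx.fspan (Facc ∪ F) ∧
              (ξ = 0 → vec ++ [x, y] ∈ S) ∧
              (ξ ≠ 0 → ih ξ hξ (ctx.fspan (Eacc ∪ E)) (ctx.fspan (Facc ∪ F))
                (vec ++ [x, y])))

/-- Player II has a strategy in the adversarial game `B^α_X` to play in `S`. -/
noncomputable def IIStratB (X : Set 𝒲) (α : Ordinal) (S : Set (List 𝒲)) : Prop :=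
  (α = 0 → ([] : List 𝒲) ∈ S) ∧
  (α ≠ 0 → ctx.IIWinsB X S α (ctx.fspan ∅) (ctx.fspan ∅) [])

end Frame

end Rosendal

/-! The coordinates of a Schauder basis are continuous, so block sequences are minimal systems and
`∼_K` turns into `∼_{2K}` under small perturbations. Fix a strategy of I against
`2K`-equivalence with `(y n)`. If II only answers by vectors of fixed finite nets in the spaces
`[x j : j ∈ J]`, the strategy reaches finitely many positions supported below `M`, and one number
`b M` bounds all integers played there; take `J_M = [M, b M]`. A sequence of the tree over
`Z = [x j : j ∉ ⋃_{M ∈ A} J_M]` is then copied by a run in which II, in each round, skips some `J_M`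
with `M ∈ A` and plays a point of the net close to the next vector. As the outcome of such a run is
never `2K`-equivalent to `(y n)`, the ordinals played by I do not reach `0` while the sequence stays
in the tree, so they bound its rank. -/

namespace Rosendal

/-! ### Minimal systems and Schauder bases -/

section Minimal

variable {ι E : Type*} [NormedAddCommGroup E] [NormedSpace ℝ E]

/-- The Banach space of convergent series `∑ a n • e n`, a series being encoded by its sequence of
partial sums, extended to `OnePoint ℕ` by the value of the series at `∞`. -/
def convergentSeries (e : ℕ → E) : Submodule ℝ C(OnePoint ℕ, E) where
  carrier := {f | f ((0 : ℕ) : OnePoint ℕ) = 0 ∧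
    ∀ n : ℕ, f ((n + 1 : ℕ) : OnePoint ℕ) - f (n : OnePoint ℕ) ∈ Submodule.span ℝ {e n}}
  add_mem' := fun ⟨hf₀, hf⟩ ⟨hg₀, hg⟩ => ⟨by simp [hf₀, hg₀], fun n => by
    simpa [add_sub_add_comm] using add_mem (hf n) (hg n)⟩
  zero_mem' := by simp
  smul_mem' := fun c f ⟨hf₀, hf⟩ => ⟨by simp [hf₀], fun n => by
    simpa [smul_sub] using Submodule.smul_mem _ c (hf n)⟩

theorem isClosed_convergentSeries (e : ℕ → E) :
    IsClosed (convergentSeries e : Set C(OnePoint ℕ, E)) := by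
  have heval (p : OnePoint ℕ) : Continuous fun f : C(OnePoint ℕ, E) => f p :=
    continuous_eval_const p
  have hincr (n : ℕ) : IsClosed {f : C(OnePoint ℕ, E) |
      f ((n + 1 : ℕ) : OnePoint ℕ) - f (n : OnePoint ℕ) ∈ Submodule.span ℝ {e n}} :=
    (Submodule.closed_of_finiteDimensional (Submodule.span ℝ {e n})).preimage
      ((heval _).sub (heval _))
  convert! (isClosed_eq (heval ((0 : ℕ) : OnePoint ℕ)) (continuous_const (y := 0))).inter
    (isClosed_iInter hincr) using 1
  ext f
  simp [convergentSeries]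

theorem mem_convergentSeries_iff {e : ℕ → E} {f : C(OnePoint ℕ, E)} :
    f ∈ convergentSeries e ↔
      ∃ a : ℕ → ℝ, ∀ n : ℕ, f (n : OnePoint ℕ) = ∑ i ∈ Finset.range n, a i • e i := by
  constructor
  · rintro ⟨hf₀, hf⟩
    choose a ha using fun n => Submodule.mem_span_singleton.1 (hf n)
    refine ⟨a, fun n => ?_⟩
    induction n with
    | zero => simpa using hf₀
    | succ n ih => rw [Finset.sum_range_succ, ← ih, ha, add_sub_cancel]
  · rintro ⟨a, ha⟩
    refine ⟨by simp [ha], fun n => ?_⟩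
    rw [ha, ha, Finset.sum_range_succ, add_sub_cancel_left]
    exact Submodule.smul_mem _ _ (Submodule.mem_span_singleton_self _)

/-- The sum of a convergent series, as a bounded operator. -/
noncomputable def seriesSum (e : ℕ → E) : convergentSeries e →L[ℝ] E :=
  (ContinuousMap.evalCLM ℝ OnePoint.infty).comp (convergentSeries e).subtypeL

theorem tendsto_sum_range_single (e : ℕ → E) (l : ℕ) :
    Tendsto (fun n => ∑ i ∈ Finset.range n, (Pi.single l 1 : ℕ → ℝ) i • e i) atTop (𝓝 (e l)) := by
  refine tendsto_const_nhds.congr' ?_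
  filter_upwards [eventually_gt_atTop l] with n hn
  simp [Pi.single_apply, ite_smul, hn]

/-- A system of vectors is minimal if it admits biorthogonal bounded functionals. -/
def IsMinimalSystem (b : ι → E) : Prop :=
  ∀ i, ∃ φ : StrongDual ℝ E, φ (b i) = 1 ∧ ∀ j, j ≠ i → φ (b j) = 0

theorem IsMinimalSystem.ne_zero {b : ι → E} (hb : IsMinimalSystem b) (i : ι) : b i ≠ 0 := by
  rintro h
  obtain ⟨φ, hφ, -⟩ := hb i
  simp [h] at hφ

end Minimal

section SchauderBasis

variable {𝒲 : Type} [NormedAddCommGroup 𝒲] [NormedSpace ℝ 𝒲] {e : ℕ → 𝒲}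

theorem IsSchauderBasis.ne_zero (he : IsSchauderBasis e) (l : ℕ) : e l ≠ 0 := fun hl => by
  have hsingle := tendsto_sum_range_single e l
  rw [hl] at hsingle
  have hzero : Pi.single l 1 = (0 : ℕ → ℝ) := (he 0).unique hsingle (by simp)
  simpa using congrFun hzero l

theorem IsSchauderBasis.bijective_seriesSum (he : IsSchauderBasis e) :
    Function.Bijective (seriesSum e) := by
  refine ⟨?_, fun v => ?_⟩
  · rintro ⟨f, hf⟩ ⟨g, hg⟩ (hfg : f OnePoint.infty = g OnePoint.infty)
    obtain ⟨a, ha⟩ := mem_convergentSeries_iff.1 hf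
    obtain ⟨c, hc⟩ := mem_convergentSeries_iff.1 hg
    have hf_lim := (OnePoint.continuous_iff_from_nat f).1 f.continuous
    have hg_lim := (OnePoint.continuous_iff_from_nat g).1 g.continuous
    simp only [ha, hc, hfg] at hf_lim hg_lim
    obtain rfl := (he _).unique hf_lim hg_lim
    refine Subtype.ext (ContinuousMap.ext fun p => ?_)
    induction p using OnePoint.rec with
    | infty => exact hfg
    | coe n => exact (ha n).trans (hc n).symm
  · obtain ⟨a, ha, -⟩ := he v
    exact ⟨⟨OnePoint.continuousMapMkNat _ v ha, mem_convergentSeries_iff.2 ⟨a, fun _ => rfl⟩⟩, rfl⟩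

/-- By the open mapping theorem, the expansion of a vector depends continuously on the vector. -/
theorem IsSchauderBasis.exists_coord [CompleteSpace 𝒲] (he : IsSchauderBasis e) (l : ℕ) :
    ∃ φ : StrongDual ℝ 𝒲, ∀ (v : 𝒲) (a : ℕ → ℝ),
      Tendsto (fun n => ∑ i ∈ Finset.range n, a i • e i) atTop (𝓝 v) → φ v = a l := by
  have : CompleteSpace (convergentSeries e) := (isClosed_convergentSeries e).completeSpace_coe
  let expand := (ContinuousLinearEquiv.ofBijective (seriesSum e)
    (LinearMap.ker_eq_bot.2 he.bijective_seriesSum.1)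
    (LinearMap.range_eq_top.2 he.bijective_seriesSum.2)).symm
  let eval (n : ℕ) : convergentSeries e →L[ℝ] 𝒲 :=
    (ContinuousMap.evalCLM ℝ (n : OnePoint ℕ)).comp (convergentSeries e).subtypeL
  obtain ⟨ψ, hψ⟩ := SeparatingDual.exists_eq_one (R := ℝ) (he.ne_zero l)
  refine ⟨ψ.comp ((eval (l + 1) - eval l).comp expand.toContinuousLinearMap), fun v a ha => ?_⟩
  let f : convergentSeries e :=
    ⟨OnePoint.continuousMapMkNat _ v ha, mem_convergentSeries_iff.2 ⟨a, fun _ => rfl⟩⟩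
  have hexpand : expand v = f := (ContinuousLinearEquiv.symm_apply_eq _).2 rfl
  have hincr : eval (l + 1) f - eval l f = a l • e l := Finset.sum_range_succ_sub_sum _
  calc ψ (eval (l + 1) (expand v) - eval l (expand v)) = ψ (a l • e l) := by rw [hexpand, hincr]
    _ = a l := by simp [hψ]

theorem IsSchauderBasis.isMinimalSystem [CompleteSpace 𝒲] (he : IsSchauderBasis e) :
    IsMinimalSystem e := fun l => by
  obtain ⟨φ, hφ⟩ := he.exists_coord l
  exact ⟨φ, by simpa using hφ _ _ (tendsto_sum_range_single e l),
    fun j hj => by simpa [hj.symm] using hφ _ _ (tendsto_sum_range_single e j)⟩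

end SchauderBasis

/-! ### Perturbations -/

section Minimal

variable {ι E : Type*} [NormedAddCommGroup E] [NormedSpace ℝ E] {y : ι → E}

theorem IsMinimalSystem.exists_coeff_bound (hy : IsMinimalSystem y) (i : ι) :
    ∃ C > 0, ∀ (s : Finset ι) (a : ι → ℝ), i ∈ s → |a i| ≤ C * ‖∑ j ∈ s, a j • y j‖ := by
  obtain ⟨φ, hφi, hφ⟩ := hy i
  refine ⟨‖φ‖ + 1, by positivity, fun s a hi => ?_⟩
  have hcoeff : φ (∑ j ∈ s, a j • y j) = a i := by
    rw [map_sum, Finset.sum_eq_single_of_mem i hi fun j _ hj => by simp [hφ j hj]]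
    simp [hφi]
  calc |a i| ≤ ‖φ‖ * ‖∑ j ∈ s, a j • y j‖ := by
        rw [← hcoeff, ← Real.norm_eq_abs]; exact φ.le_opNorm _
    _ ≤ (‖φ‖ + 1) * ‖∑ j ∈ s, a j • y j‖ := by gcongr; simp

/-- Since the coefficients of `∑ a i • y i` are bounded by its norm, summable weights suffice. -/
theorem IsMinimalSystem.exists_norm_sum_smul_le [Countable ι] (hy : IsMinimalSystem y) {ε : ℝ}
    (hε : 0 < ε) :
    ∃ δ : ι → ℝ, (∀ i, 0 < δ i) ∧ ∀ (s : Finset ι) (w : ι → E), (∀ i ∈ s, ‖w i‖ ≤ δ i) →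
      ∀ a : ι → ℝ, ‖∑ i ∈ s, a i • w i‖ ≤ ε * ‖∑ i ∈ s, a i • y i‖ := by
  choose C hC hcoeff using hy.exists_coeff_bound
  have := Encodable.ofCountable ι
  obtain ⟨ε', hε', c, hc, hcε⟩ := posSumOfEncodable hε ι
  refine ⟨fun i => ε' i / C i, fun i => div_pos (hε' i) (hC i), fun s w hw a => ?_⟩
  calc ‖∑ i ∈ s, a i • w i‖ ≤ ∑ i ∈ s, |a i| * ‖w i‖ := by
        simpa only [norm_smul, Real.norm_eq_abs] using norm_sum_le s fun i => a i • w i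
    _ ≤ ∑ i ∈ s, (C i * ‖∑ j ∈ s, a j • y j‖) * (ε' i / C i) := by
        gcongr with i hi
        · exact mul_nonneg (hC i).le (norm_nonneg _)
        · exact hcoeff i s a hi
        · exact hw i hi
    _ = (∑ i ∈ s, ε' i) * ‖∑ j ∈ s, a j • y j‖ := by
        rw [Finset.sum_mul]
        refine Finset.sum_congr rfl fun i _ => ?_
        have := (hC i).ne'
        field_simp
    _ ≤ ε * ‖∑ i ∈ s, a i • y i‖ := by
        gcongr
        exact (sum_le_hasSum s (fun i _ => (hε' i).le) hc).trans hcε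

end Minimal

section SeqEquiv

variable {𝒲 : Type} [NormedAddCommGroup 𝒲] [NormedSpace ℝ 𝒲] {v w y : ℕ → 𝒲} {K K' : ℝ} {k : ℕ}

theorem SeqEquiv.mono (h : SeqEquiv K k v y) {l : ℕ} (hlk : l ≤ k)
    (hvw : ∀ i < l, v i = w i) : SeqEquiv K l w y := by
  intro a
  let a' : ℕ → ℝ := fun i => if i < l then a i else 0
  have hsum (u : ℕ → 𝒲) : ∑ i ∈ Finset.range k, a' i • u i = ∑ i ∈ Finset.range l, a i • u i := by
    rw [← Finset.sum_subset (Finset.range_mono hlk) fun i _ hi => by simp_all [a']]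
    exact Finset.sum_congr rfl fun i hi => by simp_all [a']
  have hw : ∑ i ∈ Finset.range l, a i • w i = ∑ i ∈ Finset.range l, a i • v i :=
    Finset.sum_congr rfl fun i hi => by rw [hvw i (Finset.mem_range.1 hi)]
  simpa only [hsum, hw] using h a'

theorem SeqEquiv.norm_le_and_le (h : SeqEquiv K k v y) {i : ℕ} (hi : i < k) :
    1 / K * ‖v i‖ ≤ ‖y i‖ ∧ ‖y i‖ ≤ K * ‖v i‖ := by
  simpa [Pi.single_apply, ite_smul, hi] using h (Pi.single i 1)

theorem SeqEquiv.of_perturbation (h : SeqEquiv K k v y) (hK : 0 < K) (hKK' : K < K') {ε : ℝ}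
    (hε : ε ≤ K' - K) (hε' : ε ≤ 1 / K - 1 / K')
    (hvw : ∀ a : ℕ → ℝ, ‖∑ i ∈ Finset.range k, a i • (v i - w i)‖ ≤
      ε * ‖∑ i ∈ Finset.range k, a i • y i‖) :
    SeqEquiv K' k w y := by
  intro a
  obtain ⟨hle, hge⟩ := h a
  have hdiff := hvw a
  simp only [smul_sub, Finset.sum_sub_distrib] at hdiff
  set V := ∑ i ∈ Finset.range k, a i • v i
  set U := ∑ i ∈ Finset.range k, a i • w i
  set Y := ∑ i ∈ Finset.range k, a i • y i
  have hK' : 0 < K' := hK.trans hKK'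
  rw [one_div, inv_mul_le_iff₀ hK] at hle
  rw [← div_le_iff₀' hK] at hge
  constructor
  · rw [one_div, inv_mul_le_iff₀ hK']
    calc ‖U‖ ≤ ‖V‖ + ‖V - U‖ := norm_le_norm_add_norm_sub V U
      _ ≤ K * ‖Y‖ + ε * ‖Y‖ := add_le_add hle hdiff
      _ = (K + ε) * ‖Y‖ := by ring
      _ ≤ K' * ‖Y‖ := by gcongr; linarith
  · rw [← div_le_iff₀' hK']
    calc ‖Y‖ / K' = (1 / K') * ‖Y‖ := by ring
      _ ≤ (1 / K - ε) * ‖Y‖ := by gcongr; linarith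
      _ = ‖Y‖ / K - ε * ‖Y‖ := by ring
      _ ≤ ‖V‖ - ‖V - U‖ := sub_le_sub hge hdiff
      _ ≤ ‖U‖ := by linarith [norm_sub_norm_le V U]

theorem IsMinimalSystem.exists_seqEquiv_of_near (hy : IsMinimalSystem y) (hK : 0 < K)
    (hKK' : K < K') :
    ∃ δ : ℕ → ℝ, (∀ i, 0 < δ i) ∧ ∀ (k : ℕ) (v w : ℕ → 𝒲), SeqEquiv K k v y →
      (∀ i < k, ‖v i - w i‖ ≤ δ i) → SeqEquiv K' k w y := by
  obtain ⟨δ, hδ, hsum⟩ := hy.exists_norm_sum_smul_le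
    (lt_min (sub_pos.2 hKK') (sub_pos.2 (one_div_lt_one_div_of_lt hK hKK')))
  exact ⟨δ, hδ, fun k v w h hvw => h.of_perturbation hK hKK' (min_le_left _ _) (min_le_right _ _)
    (hsum _ _ fun i hi => hvw i (Finset.mem_range.1 hi))⟩

end SeqEquiv

/-! ### Ranks of trees -/

section TreeRank

theorem acc_and_rank_lt_of_label {α : Type*} {r : α → α → Prop} {R : α → Ordinal → Prop}
    (hR : ∀ a o, R a o → ∃ ξ < o, ∀ b, r b a → ∃ ζ ≤ ξ, R b ζ) (o : Ordinal) (a : α)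
    (ha : R a o) : ∃ h : Acc r a, h.rank < o := by
  induction o using WellFoundedLT.induction generalizing a with
  | ind o ih =>
    obtain ⟨ξ, hξ, hstep⟩ := hR a o ha
    have hbelow (b : α) (hb : r b a) : ∃ h : Acc r b, h.rank < ξ := by
      obtain ⟨ζ, hζ, hRb⟩ := hstep b hb
      obtain ⟨hacc, hrank⟩ := ih ζ (hζ.trans_lt hξ) b hRb
      exact ⟨hacc, hrank.trans_le hζ⟩
    have hacc : Acc r a := Acc.intro a fun b hb => (hbelow b hb).1
    refine ⟨hacc, lt_of_le_of_lt ?_ hξ⟩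
    rw [hacc.rank_eq]
    exact Ordinal.iSup_le fun b => Order.succ_le_of_lt (hbelow b b.2).2

theorem exists_label_le_of_append {α : Type*} {T : Set (List α)} {R : List α → Ordinal → Prop}
    (hT : ∀ s u, s ++ u ∈ T → s ∈ T)
    (hR : ∀ s ∈ T, ∀ o, R s o → ∃ ξ < o, ∀ v, s ++ [v] ∈ T → R (s ++ [v]) ξ)
    {s : List α} {o : Ordinal} (hs : R s o) (hsT : s ∈ T) :
    ∃ ξ < o, ∀ u ≠ [], s ++ u ∈ T → ∃ ζ ≤ ξ, R (s ++ u) ζ := by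
  obtain ⟨ξ, hξ, hstep⟩ := hR s hsT o hs
  refine ⟨ξ, hξ, fun u hu huT => ?_⟩
  induction u using List.reverseRecOn with
  | nil => exact absurd rfl hu
  | append_singleton w v ih =>
    rcases eq_or_ne w [] with rfl | hw
    · exact ⟨ξ, le_rfl, hstep v huT⟩
    · rw [← List.append_assoc] at huT ⊢
      have hwT := hT _ _ huT
      obtain ⟨ζ, hζ, hRw⟩ := ih hw hwT
      obtain ⟨ζ', hζ', hRv⟩ := hR _ hwT ζ hRw
      exact ⟨ζ', hζ'.le.trans hζ, hRv v huT⟩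

theorem treeRank_le_of_label {α : Type} {T : Set (List α)} {R : List α → Ordinal → Prop}
    (hT : ∀ s u, s ++ u ∈ T → s ∈ T)
    (hR : ∀ s ∈ T, ∀ o, R s o → ∃ ξ < o, ∀ v, s ++ [v] ∈ T → R (s ++ [v]) ξ)
    {β : Ordinal} (hβ : R [] β) : treeRank T ≤ β := by
  have hext (s : T) (o : Ordinal) (hs : R s o) :
      ∃ ξ < o, ∀ t : T, s.val <+: t.val ∧ s.val ≠ t.val → ∃ ζ ≤ ξ, R t ζ := by
    obtain ⟨ξ, hξ, h⟩ := exists_label_le_of_append hT hR hs s.2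
    refine ⟨ξ, hξ, ?_⟩
    rintro t ⟨⟨u, hu⟩, hst⟩
    refine hu ▸ h u ?_ (hu ▸ t.2)
    rintro rfl
    exact hst (by simpa using hu)
  have hacc (s : T) : ∃ h : Acc (fun t s : T => s.val <+: t.val ∧ s.val ≠ t.val) s,
      h.rank < β := by
    have hlabel : ∃ ζ ≤ β, R s ζ := by
      rcases eq_or_ne s.val [] with hs | hs
      · exact ⟨β, le_rfl, hs ▸ hβ⟩
      · obtain ⟨ξ, hξ, h⟩ := exists_label_le_of_append hT hR hβ (hT [] s s.2)
        obtain ⟨ζ, hζ, hRs⟩ := h s hs s.2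
        exact ⟨ζ, hζ.trans hξ.le, hRs⟩
    obtain ⟨ζ, hζ, hRs⟩ := hlabel
    obtain ⟨h, hrank⟩ := acc_and_rank_lt_of_label hext ζ s hRs
    exact ⟨h, hrank.trans_le hζ⟩
  rw [treeRank, dif_pos ⟨fun s => (hacc s).1⟩, WithTop.coe_le_coe]
  exact Ordinal.iSup_le fun s => Order.succ_le_of_lt (hacc s).2

theorem embTree_of_append {𝒲 : Type} [NormedAddCommGroup 𝒲] [NormedSpace ℝ 𝒲] {y : ℕ → 𝒲}
    {Z : Set 𝒲} {K : ℝ} {s u : List 𝒲} (h : s ++ u ∈ embTree y Z K) : s ∈ embTree y Z K :=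
  ⟨fun v hv => h.1 v (List.mem_append_left u hv),
    h.2.mono (by simp) fun i hi => List.getD_append _ _ _ _ hi⟩

end TreeRank

/-! ### Blocks -/

section Net

theorem exists_finite_net {E : Type*} [NormedAddCommGroup E] [NormedSpace ℝ E] {G : Set E}
    (V : Submodule ℝ E) [FiniteDimensional ℝ V] (hG : G ⊆ V) (r : ℝ) {δ : ℝ} (hδ : 0 < δ) :
    ∃ N ⊆ G, N.Finite ∧ ∀ v ∈ G, ‖v‖ ≤ r → ∃ z ∈ N, ‖v - z‖ ≤ δ := by
  have : ProperSpace V := FiniteDimensional.proper ℝ V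
  have hball : TotallyBounded ((↑) '' Metric.closedBall (0 : V) r : Set E) :=
    ((isCompact_closedBall _ _).image continuous_subtype_val).totallyBounded
  have hGr : {v ∈ G | ‖v‖ ≤ r} ⊆ (↑) '' Metric.closedBall (0 : V) r :=
    fun v hv => ⟨⟨v, hG hv.1⟩, by simpa using hv.2, rfl⟩
  obtain ⟨N, hN, hfin, hcover⟩ := Metric.finite_approx_of_totallyBounded (hball.subset hGr) δ hδ
  refine ⟨N, fun z hz => (hN hz).1, hfin, fun v hv hvr => ?_⟩
  obtain ⟨z, hz, hvz⟩ := Set.mem_iUnion₂.1 (hcover ⟨hv, hvr⟩)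
  exact ⟨z, hz, by simpa only [dist_eq_norm] using (Metric.mem_ball.1 hvz).le⟩

end Net

namespace Frame

variable {𝒲 : Type} [NormedAddCommGroup 𝒲] [NormedSpace ℝ 𝒲] (ctx : Frame 𝒲)

theorem fspan_eq_span (S : Set 𝒲) : ctx.fspan S = Submodule.span ctx.𝔽 S := by
  ext v
  rw [SetLike.mem_coe]
  constructor
  · rintro ⟨t, htS, c, hc, rfl⟩
    exact Submodule.sum_mem _ fun w hw =>
      Submodule.smul_mem _ (⟨c w, hc w⟩ : ctx.𝔽) (Submodule.subset_span (htS hw))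
  · rw [Submodule.mem_span_iff_exists_finset_subset]
    rintro ⟨c, t, htS, -, rfl⟩
    exact ⟨t, htS, fun w => c w, fun w => (c w).2, rfl⟩

theorem fspan_subset_span (S : Set 𝒲) : ctx.fspan S ⊆ Submodule.span ℝ S :=
  ctx.fspan_eq_span S ▸ Submodule.span_subset_span ctx.𝔽 ℝ S

theorem fspan_fspan_union (S T : Set 𝒲) :
    ctx.fspan (ctx.fspan S ∪ ctx.fspan T) = ctx.fspan (S ∪ T) := by
  simp only [fspan_eq_span, Submodule.span_union, Submodule.span_span]

end Frame

section Block

variable {𝒲 : Type} [NormedAddCommGroup 𝒲] [NormedSpace ℝ 𝒲] {b y x : ℕ → 𝒲}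

theorem suppIn_iff_mem_span {v : 𝒲} {s : Finset ℕ} :
    SuppIn b v s ↔ v ∈ Submodule.span ℝ (b '' s) := by
  simp only [SuppIn, Submodule.mem_span_image_finset_iff_exists_fun', eq_comm]

variable {ctx : Frame 𝒲}

theorem Frame.BlockSeqRel.exists_supports (hy : ctx.BlockSeqRel b y) :
    ∃ D : ℕ → Finset ℕ, (∀ n, SuppIn b (y n) (D n)) ∧ Pairwise (Function.onFun Disjoint D) ∧
      ∀ n, ∀ i ∈ D n, n ≤ i := by
  obtain ⟨-, hne, D, hD, hsucc⟩ := hy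
  have hnonempty (n : ℕ) : (D n).Nonempty := by
    rw [Finset.nonempty_iff_ne_empty]
    intro hempty
    obtain ⟨a, ha⟩ := hD n
    exact hne n (by simpa [hempty] using ha)
  have hlt {m n : ℕ} (hmn : m < n) : ∀ i ∈ D m, ∀ j ∈ D n, i < j := by
    induction n, hmn using Nat.le_induction with
    | base => exact hsucc m
    | succ n _ ih =>
      intro i hi j hj
      obtain ⟨l, hl⟩ := hnonempty n
      exact (ih i hi l hl).trans (hsucc n l hl j hj)
  have hle (n : ℕ) : ∀ i ∈ D n, n ≤ i := by
    induction n with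
    | zero => exact fun i _ => i.zero_le
    | succ n ih =>
      intro i hi
      obtain ⟨l, hl⟩ := hnonempty n
      exact (ih l hl).trans_lt (hsucc n l hl i hi)
  refine ⟨D, hD, (pairwise_disjoint_on D).2 fun m n hmn => ?_, hle⟩
  exact Finset.disjoint_left.2 fun i him hin => (hlt hmn i him i hin).false

theorem Frame.BlockSeqRel.isMinimalSystem (hy : ctx.BlockSeqRel b y) (hb : IsMinimalSystem b) :
    IsMinimalSystem y := by
  obtain ⟨D, hD, hdisj, -⟩ := hy.exists_supports
  intro l
  obtain ⟨a, ha⟩ := hD l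
  obtain ⟨i, hi, hai⟩ : ∃ i ∈ D l, a i ≠ 0 := by
    by_contra! h
    exact hy.2.1 l (ha.trans (Finset.sum_eq_zero fun i hi => by simp [h i hi]))
  obtain ⟨φ, hφi, hφ⟩ := hb i
  refine ⟨(a i)⁻¹ • φ, ?_, fun n hn => ?_⟩
  · have hφl : φ (y l) = a i := by
      rw [ha, map_sum, Finset.sum_eq_single_of_mem i hi fun j _ hj => by simp [hφ j hj]]
      simp [hφi]
    simp [hφl, hai]
  · obtain ⟨c, hc⟩ := hD n
    have hφn : φ (y n) = 0 := by
      rw [hc, map_sum]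
      refine Finset.sum_eq_zero fun j hj => ?_
      have hji : j ≠ i := by
        rintro rfl
        exact Finset.disjoint_left.1 (hdisj hn) hj hi
      simp [hφ j hji]
    simp [hφn]

theorem Frame.IsBlockSeq.isMinimalSystem (hx : ctx.IsBlockSeq x) : IsMinimalSystem x := by
  have := ctx.complete
  exact Frame.BlockSeqRel.isMinimalSystem hx ctx.basis.isMinimalSystem

theorem Frame.IsBlockSeq.natLt_fspan (hx : ctx.IsBlockSeq x) {n : ℕ} {J : Finset ℕ}
    (hJ : ∀ i ∈ J, n < i) : ctx.NatLt n (ctx.fspan (x '' J)) := by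
  obtain ⟨D, hD, -, hle⟩ := Frame.BlockSeqRel.exists_supports hx
  refine fun v hv => ⟨J.biUnion D, suppIn_iff_mem_span.2 ?_, ?_⟩
  · refine Submodule.span_le.2 ?_ (ctx.fspan_subset_span _ hv)
    rintro _ ⟨i, hi, rfl⟩
    have hDi : D i ⊆ J.biUnion D := Finset.subset_biUnion_of_mem D hi
    exact Submodule.span_mono (Set.image_mono (Finset.coe_subset.2 hDi))
      (suppIn_iff_mem_span.1 (hD i))
  · intro i hi
    obtain ⟨j, hj, hij⟩ := Finset.mem_biUnion.1 hi
    exact (hJ j hj).trans_le (hle j i hij)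

theorem Frame.isFinDimIn_fspan_image (ctx : Frame 𝒲) (x : ℕ → 𝒲) (J : Finset ℕ) :
    ctx.IsFinDimIn (ctx.fspan (x '' J)) (ctx.fspan (Set.range x)) := by
  classical
  refine ⟨J.image x, ?_, by rw [Finset.coe_image]⟩
  rw [Finset.coe_image, ctx.fspan_eq_span]
  exact (Set.image_subset_range x J).trans Submodule.subset_span

end Block

/-! ### Runs of the asymptotic game -/

section Near

variable {E : Type*} [NormedAddCommGroup E]

/-- The sequences `s` and `l` have the same length and `‖s i - l i‖ ≤ δ i` for all `i`. -/
def IsNear (δ : ℕ → ℝ) (s l : List E) : Prop :=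
  s.length = l.length ∧ ∀ i < s.length, ‖s.getD i 0 - l.getD i 0‖ ≤ δ i

theorem IsNear.append_singleton {δ : ℕ → ℝ} {s l : List E} (h : IsNear δ s l) {v z : E}
    (hvz : ‖v - z‖ ≤ δ s.length) : IsNear δ (s ++ [v]) (l ++ [z]) := by
  refine ⟨by simp [h.1], fun i hi => ?_⟩
  rcases Nat.lt_succ_iff_lt_or_eq.1 (by simpa using hi) with hi | rfl
  · rw [List.getD_append _ _ _ _ hi, List.getD_append _ _ _ _ (h.1 ▸ hi)]
    exact h.2 i hi
  · simpa [h.1] using hvz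

end Near

section Game

/-- A position of the asymptotic game below `[x i : i ∈ ℕ]`: the ordinal bounding the next one to
be played by I, the finite set `J` such that `[x i : i ∈ J]` is the sum of the subspaces played by
II, and the vectors played by II. -/
structure Position (𝒲 : Type) where
  bound : Ordinal.{0}
  support : Finset ℕ
  vectors : List 𝒲

/-- The positions reached from `p₀` if I plays the ordinals given by `ξ` and II, in round `l`,
enlarges the support to `J` and picks a vector in `net l J`. The integers played by I are
ignored. -/
inductive Reachable (p₀ : Position 𝒲) (ξ : Position 𝒲 → Ordinal.{0})
    (net : ℕ → Finset ℕ → Set 𝒲) : Position 𝒲 → Prop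
  | start : Reachable p₀ ξ net p₀
  | move {p : Position 𝒲} (hp : Reachable p₀ ξ net p) {J : Finset ℕ} (hJ : p.support ⊂ J)
      {z : 𝒲} (hz : z ∈ net p.vectors.length J) :
      Reachable p₀ ξ net ⟨ξ p, J, p.vectors ++ [z]⟩

variable {𝒲 : Type} {p₀ : Position 𝒲} {ξ : Position 𝒲 → Ordinal.{0}} {net : ℕ → Finset ℕ → Set 𝒲}

theorem finite_reachable_support_eq (hnet : ∀ l J, (net l J).Finite) (J : Finset ℕ) :
    {p | Reachable p₀ ξ net p ∧ p.support = J}.Finite := by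
  induction J using Finset.strongInduction with
  | H J ih =>
    let next (p : Position 𝒲) (z : 𝒲) : Position 𝒲 := ⟨ξ p, J, p.vectors ++ [z]⟩
    have hfin : (⋃ I ∈ J.ssubsets, ⋃ p ∈ {p | Reachable p₀ ξ net p ∧ p.support = I},
        next p '' net p.vectors.length J).Finite :=
      J.ssubsets.finite_toSet.biUnion fun I hI =>
        (ih I (Finset.mem_ssubsets.1 hI)).biUnion fun p _ => (hnet _ J).image _
    refine (hfin.insert p₀).subset ?_
    rintro _ ⟨_ | @⟨p, hp, _, hpJ, z, hz⟩, rfl⟩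
    · exact Set.mem_insert _ _
    · refine Set.mem_insert_of_mem _ (Set.mem_biUnion (Finset.mem_ssubsets.2 hpJ) ?_)
      exact Set.mem_biUnion ⟨hp, rfl⟩ ⟨z, hz, rfl⟩

theorem exists_bound_reachable (hnet : ∀ l J, (net l J).Finite) (n : Position 𝒲 → ℕ) :
    ∃ b : ℕ → ℕ, ∀ M, M ≤ b M ∧
      ∀ p, Reachable p₀ ξ net p → p.support ⊆ Finset.range M → n p ≤ b M := by
  have hbdd (M : ℕ) : ∃ B, M ≤ B ∧
      ∀ p, Reachable p₀ ξ net p → p.support ⊆ Finset.range M → n p ≤ B := by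
    have hfin : (⋃ J ∈ (Finset.range M).powerset,
        {p | Reachable p₀ ξ net p ∧ p.support = J}).Finite :=
      (Finset.range M).powerset.finite_toSet.biUnion fun J _ =>
        finite_reachable_support_eq hnet J
    obtain ⟨B, hB⟩ := (hfin.image n).bddAbove
    refine ⟨max M B, le_max_left _ _, fun p hp hpM => le_max_of_le_right (hB ⟨p, ?_, rfl⟩)⟩
    exact Set.mem_biUnion (Finset.mem_powerset.2 hpM) ⟨hp, rfl⟩
  exact Classical.axiomOfChoice hbdd

variable [NormedAddCommGroup 𝒲] [NormedSpace ℝ 𝒲] {ctx : Frame 𝒲} {x : ℕ → 𝒲}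
  {S : Set (List 𝒲)}

theorem Frame.iWinsF_iff {X : Set 𝒲} {β : Ordinal} {F : Set 𝒲} {l : List 𝒲} :
    ctx.IWinsF X S β F l ↔ ∃ n : ℕ, ∃ ξ < β, ∀ G : Set 𝒲, ctx.IsFinDimIn G X → ctx.NatLt n G →
      ∀ z : 𝒲, z ≠ 0 → z ∈ ctx.fspan (F ∪ G) → (ξ = 0 → l ++ [z] ∈ S) ∧
        (ξ ≠ 0 → ctx.IWinsF X S ξ (ctx.fspan (F ∪ G)) (l ++ [z])) := by
  unfold Frame.IWinsF
  rw [WellFounded.fix_eq]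
  simp only [exists_prop]

/-- I has a strategy to steer the outcome into `S` from the position `p`. -/
def Position.IsWinning (ctx : Frame 𝒲) (x : ℕ → 𝒲) (S : Set (List 𝒲)) (p : Position 𝒲) : Prop :=
  (p.bound = 0 → p.vectors ∈ S) ∧ (p.bound ≠ 0 →
    ctx.IWinsF (ctx.fspan (Set.range x)) S p.bound (ctx.fspan (x '' p.support)) p.vectors)

theorem Frame.IStratF.isWinning_initial {β : Ordinal}
    (h : ctx.IStratF (ctx.fspan (Set.range x)) β S) :
    Position.IsWinning ctx x S ⟨β, ∅, []⟩ := by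
  simpa [Position.IsWinning, Frame.IStratF] using h

theorem Position.IsWinning.exists_move (hx : ctx.IsBlockSeq x) {p : Position 𝒲}
    (hp : p.IsWinning ctx x S) (hβ : p.bound ≠ 0) :
    ∃ n : ℕ, ∃ ξ < p.bound, ∀ J : Finset ℕ, p.support ⊆ J → (∀ i ∈ J \ p.support, n < i) →
      ∀ z ∈ ctx.fspan (x '' J), z ≠ 0 → IsWinning ctx x S ⟨ξ, J, p.vectors ++ [z]⟩ := by
  obtain ⟨n, ξ, hξ, hmove⟩ := Frame.iWinsF_iff.1 (hp.2 hβ)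
  refine ⟨n, ξ, hξ, fun J hJ hn z hz hz₀ => ?_⟩
  have hspan : ctx.fspan (ctx.fspan (x '' p.support) ∪ ctx.fspan (x '' ↑(J \ p.support))) =
      ctx.fspan (x '' J) := by
    rw [ctx.fspan_fspan_union, ← Set.image_union, ← Finset.coe_union,
      Finset.union_sdiff_of_subset hJ]
  simpa only [hspan, IsWinning] using hmove _ (ctx.isFinDimIn_fspan_image x (J \ p.support))
    (hx.natLt_fspan hn) z hz₀ (hspan ▸ hz)

/-- The integers `n p` and the ordinals `ξ p` form a strategy for I that preserves the winning
positions. -/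
structure IsWinningStrategy (ctx : Frame 𝒲) (x : ℕ → 𝒲) (S : Set (List 𝒲)) (n : Position 𝒲 → ℕ)
    (ξ : Position 𝒲 → Ordinal.{0}) : Prop where
  lt_bound {p : Position 𝒲} : p.IsWinning ctx x S → p.bound ≠ 0 → ξ p < p.bound
  isWinning_move {p : Position 𝒲} : p.IsWinning ctx x S → p.bound ≠ 0 → ∀ J : Finset ℕ,
    p.support ⊆ J → (∀ i ∈ J \ p.support, n p < i) → ∀ z ∈ ctx.fspan (x '' J), z ≠ 0 →
      Position.IsWinning ctx x S ⟨ξ p, J, p.vectors ++ [z]⟩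

theorem Frame.IsBlockSeq.exists_isWinningStrategy (hx : ctx.IsBlockSeq x) (S : Set (List 𝒲)) :
    ∃ n ξ, IsWinningStrategy ctx x S n ξ := by
  choose! n ξ hξ hmove using fun (p : Position 𝒲) (hp : p.IsWinning ctx x S) hβ =>
    hp.exists_move hx hβ
  exact ⟨n, ξ, fun hp => hξ _ hp, fun hp => hmove _ hp⟩

/-- The finite set `net l J` is `δ l`-dense in the nonzero vectors of norm at most `r l` of
`[x i : i ∈ J]`. -/
structure IsNetFamily (ctx : Frame 𝒲) (x : ℕ → 𝒲) (r δ : ℕ → ℝ)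
    (net : ℕ → Finset ℕ → Set 𝒲) : Prop where
  finite (l : ℕ) (J : Finset ℕ) : (net l J).Finite
  subset (l : ℕ) (J : Finset ℕ) : net l J ⊆ ctx.fspan (x '' J) \ {0}
  exists_near (l : ℕ) (J : Finset ℕ) {v : 𝒲} :
    v ∈ ctx.fspan (x '' J) \ {0} → ‖v‖ ≤ r l → ∃ z ∈ net l J, ‖v - z‖ ≤ δ l

theorem Frame.exists_isNetFamily (ctx : Frame 𝒲) (x : ℕ → 𝒲) (r : ℕ → ℝ) {δ : ℕ → ℝ}
    (hδ : ∀ l, 0 < δ l) : ∃ net, IsNetFamily ctx x r δ net := by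
  have hnet (l : ℕ) (J : Finset ℕ) := by
    have : FiniteDimensional ℝ (Submodule.span ℝ (x '' J)) :=
      FiniteDimensional.span_of_finite ℝ (J.finite_toSet.image x)
    exact exists_finite_net (Submodule.span ℝ (x '' J))
      (Set.sdiff_subset.trans (ctx.fspan_subset_span _) : ctx.fspan (x '' J) \ {0} ⊆ _)
      (r l) (hδ l)
  choose net hsub hfin hnear using hnet
  exact ⟨net, hfin, hsub, hnear⟩

end Game

section Intervals

theorem exists_next_support {A T : Set ℕ} {b : ℕ → ℕ} (hA : A.Infinite) {M : ℕ} (hM : M ≤ b M)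
    (hT : ∀ j ∈ T, j ∉ Finset.Icc M (b M)) {I : Finset ℕ} (hI : I ⊆ Finset.range M)
    (hTI : ∀ j ∈ T, j < M → j ∈ I) (N : ℕ) :
    ∃ M' ∈ A, N ≤ M' ∧ ∃ J ⊆ Finset.range M', I ⊂ J ∧ (∀ j ∈ T, j < M' → j ∈ J) ∧
      ∀ i ∈ J \ I, b M < i := by
  obtain ⟨M', hM'A, hM'⟩ := hA.exists_gt (max N (b M + 1))
  rw [max_lt_iff] at hM'
  refine ⟨M', hM'A, hM'.1.le, I ∪ Finset.Ioo (b M) M', ?_, ?_, ?_, ?_⟩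
  · intro i hi
    have := @hI i
    grind
  · have hnew : b M + 1 ∉ I := fun h => by have := hI h; grind
    refine Finset.ssubset_iff_subset_ne.2 ⟨Finset.subset_union_left, fun h => hnew ?_⟩
    rw [h]
    grind
  · intro j hj hjM'
    have := hT j hj
    have := hTI j hj
    grind
  · grind

end Intervals

section Main

variable {𝒲 : Type} [NormedAddCommGroup 𝒲] [NormedSpace ℝ 𝒲] {ctx : Frame 𝒲} {x y : ℕ → 𝒲}
  {S : Set (List 𝒲)}

theorem Frame.exists_finset_mem_fspan_image {T : Set ℕ} {v : 𝒲} (hv : v ∈ ctx.fspan (x '' T)) :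
    ∃ t : Finset ℕ, ↑t ⊆ T ∧ v ∈ ctx.fspan (x '' t) := by
  simp only [ctx.fspan_eq_span, SetLike.mem_coe] at hv ⊢
  obtain ⟨t, htT, c, rfl⟩ := (Submodule.mem_span_image_iff_exists_fun ctx.𝔽).1 hv
  exact ⟨t, htT, Submodule.sum_mem _ fun i _ =>
    Submodule.smul_mem _ _ (Submodule.subset_span (Set.mem_image_of_mem x i.2))⟩

/-- The position `p` is winning for I, the vectors played by II copy `s` up to `δ`, and the support
of `p` lies below `M` and contains all indices of `T` below `M`. The bound of such a position is an
upper bound for the rank of the tree above `s`. -/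
structure IsShadow (ctx : Frame 𝒲) (x : ℕ → 𝒲) (S : Set (List 𝒲)) (δ : ℕ → ℝ) (T : Set ℕ)
    (M : ℕ) (s : List 𝒲) (p : Position 𝒲) : Prop where
  isWinning : p.IsWinning ctx x S
  support_subset : p.support ⊆ Finset.range M
  mem_support : ∀ j ∈ T, j < M → j ∈ p.support
  isNear : IsNear δ s p.vectors

theorem IsShadow.exists_next {δ r : ℕ → ℝ} {n : Position 𝒲 → ℕ} {ξ : Position 𝒲 → Ordinal.{0}}
    {net : ℕ → Finset ℕ → Set 𝒲} (hstrat : IsWinningStrategy ctx x S n ξ)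
    (hnet : IsNetFamily ctx x r δ net) {T : Set ℕ} {M : ℕ} {s : List 𝒲} {p : Position 𝒲}
    (h : IsShadow ctx x S δ T M s p) (hp : p.bound ≠ 0) {A : Set ℕ} (hA : A.Infinite) {b : ℕ → ℕ}
    (hM : M ≤ b M) (hn : n p ≤ b M) (hT : ∀ j ∈ T, j ∉ Finset.Icc M (b M)) {v : 𝒲}
    (hv : v ∈ ctx.fspan (x '' T)) (hv₀ : v ≠ 0) (hvr : ‖v‖ ≤ r s.length) :
    ∃ M' ∈ A, ∃ J, p.support ⊂ J ∧ ∃ z ∈ net p.vectors.length J,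
      IsShadow ctx x S δ T M' (s ++ [v]) ⟨ξ p, J, p.vectors ++ [z]⟩ := by
  obtain ⟨t, htT, hvt⟩ := Frame.exists_finset_mem_fspan_image hv
  obtain ⟨N, hN⟩ := t.exists_nat_subset_range
  obtain ⟨M', hM', hNM', J, hJM', hpJ, hTJ, hJ⟩ :=
    exists_next_support hA hM hT h.support_subset h.mem_support N
  have htJ : t ⊆ J := fun j hj => hTJ j (htT hj) ((Finset.mem_range.1 (hN hj)).trans_le hNM')
  have hvJ : v ∈ ctx.fspan (x '' J) := by
    rw [ctx.fspan_eq_span] at hvt ⊢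
    exact Submodule.span_mono (Set.image_mono (Finset.coe_subset.2 htJ)) hvt
  obtain ⟨z, hz, hvz⟩ := hnet.exists_near s.length J ⟨hvJ, hv₀⟩ hvr
  obtain ⟨hzJ, hz₀⟩ := hnet.subset _ _ hz
  exact ⟨M', hM', J, hpJ, z, h.isNear.1 ▸ hz,
    hstrat.isWinning_move h.isWinning hp J hpJ.subset (fun i hi => hn.trans_lt (hJ i hi)) z hzJ hz₀,
    hJM', hTJ, h.isNear.append_singleton hvz⟩

theorem treeRank_embTree_le_of_isShadow {K : ℝ} {δ : ℕ → ℝ} {n : Position 𝒲 → ℕ}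
    {ξ : Position 𝒲 → Ordinal.{0}} {net : ℕ → Finset ℕ → Set 𝒲}
    (hstrat : IsWinningStrategy ctx x S n ξ)
    (hnet : IsNetFamily ctx x (fun l => K * ‖y l‖) δ net) (hK : 0 < K) (hy : ∀ l, y l ≠ 0)
    (hS : ∀ s l, SeqEquiv K s.length (fun i => s.getD i 0) y → IsNear δ s l → l ∉ S)
    {p₀ : Position 𝒲} {b : ℕ → ℕ}
    (hb : ∀ M, M ≤ b M ∧ ∀ p, Reachable p₀ ξ net p → p.support ⊆ Finset.range M → n p ≤ b M)
    {A T : Set ℕ} (hA : A.Infinite) (hT : ∀ M ∈ A, ∀ j ∈ T, j ∉ Finset.Icc M (b M))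
    {M₀ : ℕ} (hM₀ : M₀ ∈ A) (hp₀ : IsShadow ctx x S δ T M₀ [] p₀) :
    treeRank (embTree y (ctx.fspan (x '' T)) K) ≤ p₀.bound := by
  let R (s : List 𝒲) (o : Ordinal) : Prop :=
    ∃ M ∈ A, ∃ p, Reachable p₀ ξ net p ∧ IsShadow ctx x S δ T M s p ∧ p.bound = o
  refine treeRank_le_of_label (R := R) (fun s u => embTree_of_append) ?_
    ⟨M₀, hM₀, p₀, .start, hp₀, rfl⟩
  rintro s hs _ ⟨M, hM, p, hp, hsp, rfl⟩
  have hbound : p.bound ≠ 0 := fun h₀ => hS s _ hs.2 hsp.isNear (hsp.isWinning.1 h₀)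
  refine ⟨ξ p, hstrat.lt_bound hsp.isWinning hbound, fun v hv => ?_⟩
  obtain ⟨hv_le, hv_ge⟩ := hv.2.norm_le_and_le (i := s.length) (by simp)
  rw [one_div, inv_mul_le_iff₀ hK] at hv_le
  simp only [List.getD_append_right _ _ _ _ le_rfl, Nat.sub_self, List.getD_cons_zero]
    at hv_le hv_ge
  have hv₀ : v ≠ 0 := by
    rintro rfl
    exact hy s.length (by simpa using hv_ge)
  obtain ⟨M', hM', J, hpJ, z, hz, hshadow⟩ := hsp.exists_next hstrat hnet hbound hA (hb M).1
    ((hb M).2 p hp hsp.support_subset) (hT M hM) (hv.1 v (by simp)) hv₀ hv_le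
  exact ⟨M', hM', _, hp.move hpJ hz, hshadow, rfl⟩

theorem interval_lemma_general (hx : ctx.IsBlockSeq x) (hy : IsMinimalSystem y) {β : Ordinal}
    {K K' : ℝ} (hK : 0 < K) (hKK' : K < K')
    (h : ctx.IStratF (ctx.fspan (Set.range x)) β {l | ¬OutcomeEquiv K' l y}) :
    ∃ b : ℕ → ℕ, (∀ m, m ≤ b m) ∧ ∀ A : Set ℕ, A.Infinite → 0 ∈ A →
      treeRank (embTree y
        (ctx.fspan {v | ∃ j : ℕ, (∀ m ∈ A, j ∉ Finset.Icc m (b m)) ∧ v = x j}) K) ≤ β := by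
  obtain ⟨δ, hδ, hperturb⟩ := hy.exists_seqEquiv_of_near hK hKK'
  obtain ⟨net, hnet⟩ := ctx.exists_isNetFamily x (fun l => K * ‖y l‖) hδ
  obtain ⟨n, ξ, hstrat⟩ := hx.exists_isWinningStrategy {l | ¬OutcomeEquiv K' l y}
  obtain ⟨b, hb⟩ := exists_bound_reachable (p₀ := ⟨β, ∅, []⟩) (ξ := ξ) hnet.finite n
  refine ⟨b, fun m => (hb m).1, fun A hA h₀ => ?_⟩
  have hZ : {v | ∃ j : ℕ, (∀ m ∈ A, j ∉ Finset.Icc m (b m)) ∧ v = x j} =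
      x '' {j | ∀ m ∈ A, j ∉ Finset.Icc m (b m)} := by
    ext v
    simp only [Set.mem_image, Set.mem_ofPred_eq, eq_comm]
  rw [hZ]
  refine treeRank_embTree_le_of_isShadow hstrat hnet hK hy.ne_zero ?_ hb hA
    (fun M hM j hj => hj M hM) h₀
    ⟨h.isWinning_initial, Finset.empty_subset _, by simp, by simp [IsNear]⟩
  intro s l hs hsl hl
  exact hl (hsl.1 ▸ hperturb s.length _ _ hs hsl.2 : SeqEquiv K' l.length _ y)

end Main

/-- Suppose `(x n)` is a block sequence such that, for every normalised
block sequence `(y n)` in `X = [x n]` and every `K ≥ 1`, I has a strategy in `F^β_X` to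
play outcomes not `K`-equivalent to `(y n)`.  Then for every normalised block sequence
`(y n)` in `X` and `K ≥ 1` there is a sequence `(J m)` of intervals (here given by their
endpoints `a m ≤ b m`) with `min J m → ∞` such that for every infinite `A ⊆ ℕ`
containing `0`, the tree of sequences in `Z = [x j : j ∉ ⋃_{m ∈ A} J m]` that are
`K`-equivalent to `(y n)` has rank at most `β`. -/
theorem interval_lemma
    (𝒲 : Type) [NormedAddCommGroup 𝒲] [NormedSpace ℝ 𝒲] (ctx : Frame 𝒲)
    (x : ℕ → 𝒲) (hx : ctx.IsBlockSeq x)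
    (β : Ordinal) (hβ : β < (Cardinal.aleph 1).ord)
    (h : ∀ y : ℕ → 𝒲, ctx.BlockSeqRel x y → (∀ n, ‖y n‖ = 1) → ∀ K : ℝ, 1 ≤ K →
      ctx.IStratF (ctx.fspan (Set.range x)) β {l | ¬OutcomeEquiv K l y}) :
    ∀ y : ℕ → 𝒲, ctx.BlockSeqRel x y → (∀ n, ‖y n‖ = 1) → ∀ K : ℝ, 1 ≤ K →
      ∃ a b : ℕ → ℕ, (∀ m, a m ≤ b m) ∧ Filter.Tendsto a Filter.atTop Filter.atTop ∧
        ∀ A : Set ℕ, A.Infinite → 0 ∈ A →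
          treeRank (embTree y
              (ctx.fspan {v | ∃ j : ℕ, (∀ m ∈ A, j ∉ Finset.Icc (a m) (b m)) ∧ v = x j})
              K)
            ≤ (β : WithTop Ordinal) := by
  intro y hy hnorm K hK
  obtain ⟨b, hb, hrank⟩ := interval_lemma_general hx (hy.isMinimalSystem hx.isMinimalSystem)
    (K := K) (K' := 2 * K) (by linarith) (by linarith) (h y hy hnorm (2 * K) (by linarith))
  exact ⟨id, b, hb, Filter.tendsto_id, hrank⟩

end Rosendal
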